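/- arXiv:2508.04209 — 3 statements merged into one kernel-verified Lean document; each statement's English description precedes it below -/
import Mathlib

section
/- Let G = (V,E) be a finite simple graph with |V| = n, and let k be an integer with 1 ≤ k ≤ n/2. Then the sum of the k largest eigenvalues of the Laplacian matrix of G is at most the sum of the 2k largest vertex degrees of G: ∑_{i=1}^{k} λ_i(L(G)) ≤ ∑_{i=1}^{2k} d_i(G). -/
open Finset

/-- The `i`-th largest entry (1-indexed, so `i = 1` gives the maximum) of a tuple
`f : Fin n → ℝ`, counted with multiplicity. Junk value `0` outside the range `1 ≤ i ≤ n`. -/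
noncomputable def ithLargest {n : ℕ} (f : Fin n → ℝ) (i : ℕ) : ℝ :=
  if h : 1 ≤ i ∧ i ≤ n then f (Tuple.sort f (Fin.rev ⟨i - 1, by omega⟩)) else 0

/-- The eigenvalues of the Laplacian matrix of a finite simple graph `G`
(as a tuple indexed by the vertices, with multiplicity). -/
noncomputable def lapEigs {n : ℕ} (G : SimpleGraph (Fin n)) [DecidableRel G.Adj] :
    Fin n → ℝ :=
  (SimpleGraph.posSemidef_lapMatrix ℝ G).isHermitian.eigenvalues

/-- The degree sequence of `G`, as a real-valued tuple indexed by the vertices. -/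
noncomputable def degTuple {n : ℕ} (G : SimpleGraph (Fin n)) [DecidableRel G.Adj] :
    Fin n → ℝ :=
  fun v => (G.degree v : ℝ)

/-!
Let `P` be the orthogonal projection onto the span of eigenvectors for the `k` largest eigenvalues
of the Laplacian `L`. Then `∑ i ≤ k, λ i = tr (L P)`, which is the sum over the edges `uv` of
`‖P (e_u - e_v)‖² = P u u + P v v - 2 * P u v`. It therefore suffices to find vertex weights
`0 ≤ w ≤ 1` of total mass at most `2 k = 2 tr P` with `‖P (e_u - e_v)‖² ≤ w u + w v` for all
`u ≠ v`: summing over the edges bounds the eigenvalue sum by `∑ v, deg v * w v`, which is at most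
the sum of the `2 k` largest degrees.

The choice `w v = 2 * P v v` satisfies everything but `w v ≤ 1`. At each vertex `u` where
`P u u > 1 / 2`, the excess `2 * P u u - 1` is redistributed over the other vertices `v`
proportionally to `P u v ^ 2`, and the resulting weights are truncated at `1`.
-/

section LargestEntries

theorem exists_threshold_of_forall_le {ι R : Type*} [Finite ι] [Zero R] [LinearOrder R]
    {f : ι → R} {T : Finset ι} (hf : 0 ≤ f) (hT : ∀ u ∈ T, ∀ v ∉ T, f v ≤ f u) :
    ∃ c, 0 ≤ c ∧ (∀ u ∈ T, c ≤ f u) ∧ ∀ v ∉ T, f v ≤ c := by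
  rcases (T : Set ι)ᶜ.eq_empty_or_nonempty with hTc | hTc
  · exact ⟨0, le_rfl, fun u _ ↦ hf u, fun v hv ↦ (Set.eq_empty_iff_forall_notMem.1 hTc v hv).elim⟩
  · obtain ⟨v₀, hv₀, hmax⟩ := Set.exists_max_image _ f (Set.toFinite _) hTc
    exact ⟨f v₀, hf v₀, fun u hu ↦ hT u hu v₀ hv₀, hmax⟩

theorem sum_mul_le_sum_of_sum_le_card {ι R : Type*} [Fintype ι] [CommRing R] [LinearOrder R]
    [IsOrderedRing R] {f w : ι → R} {T : Finset ι} (hf : 0 ≤ f)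
    (hT : ∀ u ∈ T, ∀ v ∉ T, f v ≤ f u) (hw₀ : 0 ≤ w) (hw₁ : w ≤ 1) (hw : ∑ v, w v ≤ #T) :
    ∑ v, f v * w v ≤ ∑ v ∈ T, f v := by
  classical
  obtain ⟨c, hc, hcT, hcTc⟩ := exists_threshold_of_forall_le hf hT
  have hpoint (v : ι) : (f v - c) * w v ≤ if v ∈ T then f v - c else 0 := by
    split_ifs with hv
    · exact mul_le_of_le_one_right (sub_nonneg.2 (hcT v hv)) (hw₁ v)
    · exact mul_nonpos_of_nonpos_of_nonneg (sub_nonpos.2 (hcTc v hv)) (hw₀ v)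
  calc ∑ v, f v * w v = ∑ v, (f v - c) * w v + c * ∑ v, w v := by
        rw [mul_sum, ← sum_add_distrib]
        exact sum_congr rfl fun v _ ↦ by ring
    _ ≤ ∑ v, (if v ∈ T then f v - c else 0) + c * #T := by
        gcongr with v
        exact hpoint v
    _ = ∑ v ∈ T, f v := by
        simp [sum_ite_mem, sum_sub_distrib, mul_comm]

/-- The positions of the `m` largest entries of a tuple, ties being broken by `Tuple.sort`. -/
noncomputable def topIndices {n m : ℕ} (f : Fin n → ℝ) (h : m ≤ n) : Finset (Fin n) :=
  univ.map ((Fin.castLEEmb h).trans (Fin.revPerm.trans (Tuple.sort f)).toEmbedding)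

variable {n m : ℕ} (f : Fin n → ℝ)

theorem card_topIndices (h : m ≤ n) : #(topIndices f h) = m := by
  simp [topIndices]

theorem ithLargest_add_one (j : Fin n) :
    ithLargest f (j + 1) = f (Tuple.sort f (Fin.rev j)) :=
  dif_pos ⟨Nat.le_add_left 1 j, j.2⟩

theorem sum_ithLargest_eq_sum_topIndices (h : m ≤ n) :
    ∑ i ∈ Icc 1 m, ithLargest f i = ∑ v ∈ topIndices f h, f v :=
  calc ∑ i ∈ Icc 1 m, ithLargest f i = ∑ i ∈ range m, ithLargest f (i + 1) := by
        rw [range_eq_Ico, sum_Ico_add', zero_add, Ico_add_one_right_eq_Icc]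
    _ = ∑ j : Fin m, ithLargest f (j + 1) := sum_range _
    _ = ∑ j : Fin m, f (Tuple.sort f (Fin.rev (Fin.castLE h j))) :=
        sum_congr rfl fun j _ ↦ ithLargest_add_one f (Fin.castLE h j)
    _ = ∑ v ∈ topIndices f h, f v := by
        rw [topIndices, sum_map]
        rfl

variable {f}

theorem le_of_mem_topIndices_of_notMem {h : m ≤ n} {u v : Fin n} (hu : u ∈ topIndices f h)
    (hv : v ∉ topIndices f h) : f v ≤ f u := by
  obtain ⟨i, -, rfl⟩ := mem_map.1 hu
  obtain ⟨j, rfl⟩ := (Fin.revPerm.trans (Tuple.sort f)).surjective v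
  have hmj : m ≤ j := by
    by_contra! hjm
    exact hv (mem_map.2 ⟨⟨j, hjm⟩, mem_univ _, rfl⟩)
  exact Tuple.monotone_sort f (Fin.rev_le_rev.2 (Fin.le_def.2 (i.2.le.trans hmj)))

theorem sum_mul_le_sum_ithLargest {w : Fin n → ℝ} (h : m ≤ n) (hf : 0 ≤ f) (hw₀ : 0 ≤ w)
    (hw₁ : w ≤ 1) (hw : ∑ v, w v ≤ m) :
    ∑ v, f v * w v ≤ ∑ i ∈ Icc 1 m, ithLargest f i := by
  rw [sum_ithLargest_eq_sum_topIndices f h]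
  exact sum_mul_le_sum_of_sum_le_card hf (fun u hu v hv ↦ le_of_mem_topIndices_of_notMem hu hv)
    hw₀ hw₁ (by rwa [card_topIndices])

end LargestEntries

section ProjectionEntries

variable {ι : Type*} [Fintype ι] {P : Matrix ι ι ℝ}

theorem apply_comm_of_isStarProjection (hP : IsStarProjection P) (u v : ι) : P u v = P v u :=
  Matrix.IsHermitian.apply hP.isSelfAdjoint v u

theorem sum_mul_apply_of_isStarProjection (hP : IsStarProjection P) (u v : ι) :
    ∑ t, P u t * P v t = P u v := by
  conv_rhs => rw [← hP.isIdempotentElem.eq, Matrix.mul_apply]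
  exact sum_congr rfl fun t _ ↦ by rw [apply_comm_of_isStarProjection hP v t]

theorem sum_sq_apply_of_isStarProjection (hP : IsStarProjection P) (u : ι) :
    ∑ t, P u t ^ 2 = P u u := by
  simpa only [sq] using sum_mul_apply_of_isStarProjection hP u u

theorem diag_nonneg_of_isStarProjection (hP : IsStarProjection P) (u : ι) : 0 ≤ P u u :=
  sum_sq_apply_of_isStarProjection hP u ▸ sum_nonneg fun _ _ ↦ sq_nonneg _

theorem diag_le_one_of_isStarProjection (hP : IsStarProjection P) (u : ι) : P u u ≤ 1 := by
  classical
  simpa using diag_nonneg_of_isStarProjection hP.one_sub u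

theorem sq_apply_le_diag_mul_diag_of_isStarProjection (hP : IsStarProjection P) (u v : ι) :
    P u v ^ 2 ≤ P u u * P v v := by
  rw [← sum_mul_apply_of_isStarProjection hP u v, ← sum_sq_apply_of_isStarProjection hP u,
    ← sum_sq_apply_of_isStarProjection hP v]
  exact sum_mul_sq_le_sq_mul_sq _ _ _

theorem two_mul_abs_apply_le_diag_add_diag_of_isStarProjection (hP : IsStarProjection P) (u v : ι) :
    2 * |P u v| ≤ P u u + P v v := by
  refine le_of_sq_le_sq ?_
    (add_nonneg (diag_nonneg_of_isStarProjection hP u) (diag_nonneg_of_isStarProjection hP v))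
  rw [mul_pow, sq_abs]
  linarith [sq_apply_le_diag_mul_diag_of_isStarProjection hP u v, sq_nonneg (P u u - P v v)]

theorem diag_add_diag_sub_le_two_mul_of_isStarProjection (hP : IsStarProjection P) (u v : ι) :
    P u u + P v v - 2 * P u v ≤ 2 * P u u + 2 * P v v := by
  linarith [two_mul_abs_apply_le_diag_add_diag_of_isStarProjection hP u v, neg_abs_le (P u v)]

theorem diag_add_diag_sub_le_two_of_isStarProjection (hP : IsStarProjection P) {u v : ι}
    (huv : u ≠ v) : P u u + P v v - 2 * P u v ≤ 2 := by
  classical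
  have hcompl := two_mul_abs_apply_le_diag_add_diag_of_isStarProjection hP.one_sub u v
  simp only [Matrix.sub_apply, Matrix.one_apply_eq, Matrix.one_apply_ne huv, zero_sub,
    abs_neg] at hcompl
  linarith [neg_abs_le (P u v)]

theorem sum_erase_sq_apply_of_isStarProjection [DecidableEq ι] (hP : IsStarProjection P) (u : ι) :
    ∑ v ∈ univ.erase u, P u v ^ 2 = P u u * (1 - P u u) := by
  have hsplit := add_sum_erase univ (fun v ↦ P u v ^ 2) (mem_univ u)
  rw [sum_sq_apply_of_isStarProjection hP] at hsplit
  linear_combination hsplit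

theorem apply_eq_zero_of_isStarProjection_of_diag_eq_one (hP : IsStarProjection P) {u v : ι}
    (huv : u ≠ v) (hu : P u u = 1) : P u v = 0 := by
  classical
  have hzero : ∑ t ∈ univ.erase u, P u t ^ 2 = 0 := by
    rw [sum_erase_sq_apply_of_isStarProjection hP, hu, sub_self, mul_zero]
  rw [sum_eq_zero_iff_of_nonneg fun _ _ ↦ sq_nonneg _] at hzero
  exact pow_eq_zero_iff two_ne_zero |>.1 (hzero v (mem_erase.2 ⟨huv.symm, mem_univ v⟩))

end ProjectionEntries

section ProjectionWeight

variable {ι : Type*} [Fintype ι] {P : Matrix ι ι ℝ} {u v : ι}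

/-- The indices `u` at which the candidate weight `2 * P u u` exceeds `1`. -/
noncomputable def heavyIndices (P : Matrix ι ι ℝ) : Finset ι :=
  {u | 1 / 2 < P u u}

/-- The part of the excess `2 * P u u - 1` of a heavy `u` that is passed on to `v`. The factor
`P u u * (1 - P u u)` is the total of `P u v ^ 2` over `v ≠ u`; where it vanishes because
`P u u = 1`, division by zero makes nothing be passed on, and indeed `P u v = 0` for `v ≠ u`. -/
noncomputable def excessTransfer (P : Matrix ι ι ℝ) (u v : ι) : ℝ :=
  P u v ^ 2 * ((2 * P u u - 1) / (P u u * (1 - P u u)))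

/-- Weights dominating `‖P (e_u - e_v)‖²` for an orthogonal projection `P`: start from the
diagonal `2 * P v v`, add what the heavy indices pass on, and truncate at `1`. -/
noncomputable def projWeight (P : Matrix ι ι ℝ) (v : ι) : ℝ :=
  min 1 (2 * P v v + ∑ u ∈ heavyIndices P, excessTransfer P u v)

theorem mem_heavyIndices : u ∈ heavyIndices P ↔ 1 / 2 < P u u := by
  simp [heavyIndices]

theorem excessTransfer_nonneg (hP : IsStarProjection P) (hu : u ∈ heavyIndices P) (v : ι) :
    0 ≤ excessTransfer P u v := by
  have hhalf := mem_heavyIndices.1 hu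
  have hone := diag_le_one_of_isStarProjection hP u
  exact mul_nonneg (sq_nonneg _)
    (div_nonneg (by linarith) (mul_nonneg (by linarith) (by linarith)))

theorem sum_excessTransfer_nonneg (hP : IsStarProjection P) (v : ι) :
    0 ≤ ∑ u ∈ heavyIndices P, excessTransfer P u v :=
  sum_nonneg fun _ hu ↦ excessTransfer_nonneg hP hu v

theorem sum_compl_heavyIndices_excessTransfer_le [DecidableEq ι] (hP : IsStarProjection P)
    (hu : u ∈ heavyIndices P) :
    ∑ v ∈ (heavyIndices P)ᶜ, excessTransfer P u v ≤ 2 * P u u - 1 := by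
  have hhalf := mem_heavyIndices.1 hu
  have hsub : (heavyIndices P)ᶜ ⊆ univ.erase u := fun v hv ↦
    mem_erase.2 ⟨fun hvu ↦ mem_compl.1 hv (hvu ▸ hu), mem_univ v⟩
  calc ∑ v ∈ (heavyIndices P)ᶜ, excessTransfer P u v
      ≤ ∑ v ∈ univ.erase u, excessTransfer P u v :=
        sum_le_sum_of_subset_of_nonneg hsub fun v _ _ ↦ excessTransfer_nonneg hP hu v
    _ = P u u * (1 - P u u) * ((2 * P u u - 1) / (P u u * (1 - P u u))) := by
        simp only [excessTransfer, ← sum_mul, sum_erase_sq_apply_of_isStarProjection hP]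
    _ ≤ 2 * P u u - 1 := by
        rw [mul_div_left_comm]
        exact mul_le_of_le_one_right (by linarith) (div_self_le_one _)

theorem diag_add_diag_sub_le_excessTransfer (hP : IsStarProjection P) (hu : 0 < P u u)
    (huv : u ≠ v) :
    P u u + P v v - 2 * P u v ≤ 1 + 2 * P v v + excessTransfer P u v := by
  rcases (diag_le_one_of_isStarProjection hP u).eq_or_lt with hone | hlt
  · simp only [excessTransfer, hone, apply_eq_zero_of_isStarProjection_of_diag_eq_one hP huv hone]
    linarith [diag_nonneg_of_isStarProjection hP v]
  · have hpos : 0 < 1 - P u u := sub_pos.2 hlt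
    have hcauchy : P u v ^ 2 / P u u ≤ P v v :=
      (div_le_iff₀' hu).2 (sq_apply_le_diag_mul_diag_of_isStarProjection hP u v)
    have hsquare : 0 ≤ (1 - P u u + P u v) ^ 2 / (1 - P u u) :=
      div_nonneg (sq_nonneg _) hpos.le
    have htransfer : excessTransfer P u v = P u v ^ 2 / (1 - P u u) - P u v ^ 2 / P u u := by
      rw [excessTransfer]
      field_simp
      ring
    have hexpand : (1 - P u u + P u v) ^ 2 / (1 - P u u) =
        1 - P u u + 2 * P u v + P u v ^ 2 / (1 - P u u) := by
      field_simp
      ring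
    linarith

theorem projWeight_le_one (P : Matrix ι ι ℝ) : projWeight P ≤ 1 :=
  fun _ ↦ min_le_left _ _

theorem projWeight_nonneg (hP : IsStarProjection P) : 0 ≤ projWeight P := fun v ↦
  le_min zero_le_one <| add_nonneg (mul_nonneg zero_le_two (diag_nonneg_of_isStarProjection hP v))
    (sum_excessTransfer_nonneg hP v)

theorem projWeight_eq_one_of_mem_heavyIndices (hP : IsStarProjection P)
    (hv : v ∈ heavyIndices P) : projWeight P v = 1 :=
  min_eq_left (by linarith [mem_heavyIndices.1 hv, sum_excessTransfer_nonneg hP v])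

theorem two_mul_diag_le_projWeight (hP : IsStarProjection P) (hv : v ∉ heavyIndices P) :
    2 * P v v ≤ projWeight P v := by
  have hhalf := mt mem_heavyIndices.2 hv
  exact le_min (by linarith) (by linarith [sum_excessTransfer_nonneg hP v])

theorem sum_projWeight_le (hP : IsStarProjection P) :
    ∑ v, projWeight P v ≤ 2 * P.trace := by
  classical
  have hheavy : ∑ u ∈ heavyIndices P,
      (projWeight P u + ∑ v ∈ (heavyIndices P)ᶜ, excessTransfer P u v) ≤
      ∑ u ∈ heavyIndices P, 2 * P u u :=
    sum_le_sum fun u hu ↦ by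
      linarith [projWeight_eq_one_of_mem_heavyIndices hP hu,
        sum_compl_heavyIndices_excessTransfer_le hP hu]
  have hlight : ∑ v ∈ (heavyIndices P)ᶜ, projWeight P v ≤
      ∑ v ∈ (heavyIndices P)ᶜ, (2 * P v v + ∑ u ∈ heavyIndices P, excessTransfer P u v) :=
    sum_le_sum fun v _ ↦ min_le_right _ _
  rw [sum_add_distrib] at hheavy hlight
  rw [sum_comm] at hlight
  calc ∑ v, projWeight P v
      = ∑ v ∈ heavyIndices P, projWeight P v + ∑ v ∈ (heavyIndices P)ᶜ, projWeight P v :=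
        (sum_add_sum_compl _ _).symm
    _ ≤ ∑ v ∈ heavyIndices P, 2 * P v v + ∑ v ∈ (heavyIndices P)ᶜ, 2 * P v v := by linarith
    _ = 2 * P.trace := by
        rw [sum_add_sum_compl, ← mul_sum]
        rfl

theorem diag_add_diag_sub_le_projWeight_of_mem_heavyIndices (hP : IsStarProjection P)
    (hu : u ∈ heavyIndices P) (huv : u ≠ v) :
    P u u + P v v - 2 * P u v ≤ projWeight P u + projWeight P v := by
  rw [projWeight_eq_one_of_mem_heavyIndices hP hu, ← sub_le_iff_le_add']
  refine le_min (by linarith [diag_add_diag_sub_le_two_of_isStarProjection hP huv]) ?_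
  have htransfer : excessTransfer P u v ≤ ∑ t ∈ heavyIndices P, excessTransfer P t v :=
    single_le_sum (fun t ht ↦ excessTransfer_nonneg hP ht v) hu
  have hpos : 0 < P u u := one_half_pos.trans (mem_heavyIndices.1 hu)
  linarith [diag_add_diag_sub_le_excessTransfer hP hpos huv]

theorem diag_add_diag_sub_le_projWeight (hP : IsStarProjection P) (huv : u ≠ v) :
    P u u + P v v - 2 * P u v ≤ projWeight P u + projWeight P v := by
  by_cases hu : u ∈ heavyIndices P
  · exact diag_add_diag_sub_le_projWeight_of_mem_heavyIndices hP hu huv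
  by_cases hv : v ∈ heavyIndices P
  · linarith [diag_add_diag_sub_le_projWeight_of_mem_heavyIndices hP hv huv.symm,
      apply_comm_of_isStarProjection hP u v]
  · linarith [diag_add_diag_sub_le_two_mul_of_isStarProjection hP u v,
      two_mul_diag_le_projWeight hP hu, two_mul_diag_le_projWeight hP hv]

end ProjectionWeight

section SpanProjection

variable {ι κ : Type*} [Fintype ι]

/-- The matrix of the orthogonal projection onto the span of the vectors `x i`, `i ∈ S`, of an
orthonormal family `x`, as a sum of rank-one projections. -/
noncomputable def spanProj (x : κ → EuclideanSpace ℝ ι) (S : Finset κ) : Matrix ι ι ℝ :=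
  ∑ i ∈ S, Matrix.vecMulVec (x i) (x i)

theorem dotProduct_eq_ite_of_orthonormal [DecidableEq κ] {x : κ → EuclideanSpace ℝ ι}
    (hx : Orthonormal ℝ x) (i j : κ) : x i ⬝ᵥ x j = if i = j then (1 : ℝ) else 0 := by
  rw [← orthonormal_iff_ite.1 hx i j, EuclideanSpace.inner_eq_star_dotProduct, star_trivial,
    dotProduct_comm]

theorem isStarProjection_spanProj {x : κ → EuclideanSpace ℝ ι} (hx : Orthonormal ℝ x)
    (S : Finset κ) : IsStarProjection (spanProj x S) := by
  classical
  constructor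
  · simp only [IsIdempotentElem, spanProj, sum_mul_sum, Matrix.vecMulVec_mul_vecMulVec,
      dotProduct_eq_ite_of_orthonormal hx]
    refine sum_congr rfl fun i hi ↦ ?_
    simp [apply_ite, ite_smul, hi]
  · refine isSelfAdjoint_sum _ fun i _ ↦ ?_
    simp [IsSelfAdjoint, Matrix.star_eq_conjTranspose]

theorem trace_spanProj {x : κ → EuclideanSpace ℝ ι} (hx : Orthonormal ℝ x) (S : Finset κ) :
    (spanProj x S).trace = #S := by
  classical
  simp [spanProj, Matrix.trace_sum, Matrix.trace_vecMulVec, dotProduct_eq_ite_of_orthonormal hx]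

theorem trace_mul_spanProj_eigenvectorBasis [DecidableEq ι] {A : Matrix ι ι ℝ}
    (hA : A.IsHermitian) (S : Finset ι) :
    (A * spanProj hA.eigenvectorBasis S).trace = ∑ i ∈ S, hA.eigenvalues i := by
  rw [spanProj, mul_sum, Matrix.trace_sum]
  refine sum_congr rfl fun i _ ↦ ?_
  rw [Matrix.mul_vecMulVec, hA.mulVec_eigenvectorBasis, Matrix.trace_vecMulVec, smul_dotProduct,
    dotProduct_eq_ite_of_orthonormal hA.eigenvectorBasis.orthonormal, if_pos rfl, smul_eq_mul,
    mul_one]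

end SpanProjection

section Laplacian

variable {V : Type*} [Fintype V] (G : SimpleGraph V) [DecidableRel G.Adj]

theorem sum_sum_neighborFinset_comm {M : Type*} [AddCommMonoid M] (f : V → V → M) :
    ∑ u, ∑ v ∈ G.neighborFinset u, f u v = ∑ u, ∑ v ∈ G.neighborFinset u, f v u :=
  sum_comm' fun u v ↦ by simp [G.adj_comm]

theorem sum_sum_neighborFinset_left {R : Type*} [NonAssocSemiring R] (w : V → R) :
    ∑ u, ∑ _v ∈ G.neighborFinset u, w u = ∑ u, G.degree u * w u := by
  simp

theorem trace_lapMatrix_mul [DecidableEq V] {R : Type*} [Ring R] (M : Matrix V V R) :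
    (G.lapMatrix R * M).trace = ∑ u, ∑ v ∈ G.neighborFinset u, (M u u - M v u) := by
  refine sum_congr rfl fun u _ ↦ ?_
  calc (G.lapMatrix R * M) u u = (G.lapMatrix R).mulVec (fun v ↦ M v u) u := rfl
    _ = ∑ v ∈ G.neighborFinset u, (M u u - M v u) := by
      simp [G.lapMatrix_mulVec_apply, sum_sub_distrib]

variable {G}

theorem trace_lapMatrix_mul_le_of_forall_adj [DecidableEq V] {M : Matrix V V ℝ} {w : V → ℝ}
    (hw : ∀ u v, G.Adj u v → M u u + M v v - M u v - M v u ≤ w u + w v) :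
    (G.lapMatrix ℝ * M).trace ≤ ∑ v, G.degree v * w v := by
  have hsum : ∑ u, ∑ v ∈ G.neighborFinset u, ((M u u - M v u) + (M v v - M u v)) ≤
      ∑ u, ∑ v ∈ G.neighborFinset u, (w u + w v) :=
    sum_le_sum fun u _ ↦ sum_le_sum fun v hv ↦ by
      linarith [hw u v ((G.mem_neighborFinset u v).1 hv)]
  simp only [sum_add_distrib] at hsum
  rw [sum_sum_neighborFinset_comm G fun u v ↦ M v v - M u v,
    sum_sum_neighborFinset_comm G fun _ v ↦ w v, ← trace_lapMatrix_mul,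
    sum_sum_neighborFinset_left] at hsum
  linarith

theorem exists_weight_sum_eigenvalues_lapMatrix_le [DecidableEq V]
    (hL : (G.lapMatrix ℝ).IsHermitian) (S : Finset V) :
    ∃ w : V → ℝ, 0 ≤ w ∧ w ≤ 1 ∧ ∑ v, w v ≤ 2 * #S ∧
      ∑ i ∈ S, hL.eigenvalues i ≤ ∑ v, G.degree v * w v := by
  have hx := hL.eigenvectorBasis.orthonormal
  have hP := isStarProjection_spanProj hx S
  refine ⟨projWeight (spanProj hL.eigenvectorBasis S), projWeight_nonneg hP, projWeight_le_one _,
    trace_spanProj hx S ▸ sum_projWeight_le hP, ?_⟩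
  rw [← trace_mul_spanProj_eigenvectorBasis hL S]
  refine trace_lapMatrix_mul_le_of_forall_adj fun u v huv ↦ ?_
  linarith [diag_add_diag_sub_le_projWeight hP huv.ne, apply_comm_of_isStarProjection hP u v]

end Laplacian

/-- for a finite simple graph `G` on `n` vertices and `1 ≤ k ≤ n/2`,
the sum of the `k` largest Laplacian eigenvalues of `G` is at most the sum of the
`2k` largest vertex degrees of `G`. -/
theorem sum_lapEigs_le_sum_degrees {n : ℕ} (G : SimpleGraph (Fin n)) [DecidableRel G.Adj]
    (k : ℕ) (hk1 : 1 ≤ k) (hk2 : k ≤ n / 2) :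
    ∑ i ∈ Finset.Icc 1 k, ithLargest (lapEigs G) i ≤
      ∑ i ∈ Finset.Icc 1 (2 * k), ithLargest (degTuple G) i := by
  have hkn : k ≤ n := hk2.trans (Nat.div_le_self n 2)
  have h2kn : 2 * k ≤ n := by omega
  obtain ⟨w, hw₀, hw₁, hw, hle⟩ := exists_weight_sum_eigenvalues_lapMatrix_le
    (SimpleGraph.posSemidef_lapMatrix ℝ G).isHermitian (topIndices (lapEigs G) hkn)
  rw [card_topIndices] at hw
  calc ∑ i ∈ Icc 1 k, ithLargest (lapEigs G) i
      = ∑ i ∈ topIndices (lapEigs G) hkn, lapEigs G i := sum_ithLargest_eq_sum_topIndices _ hkn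
    _ ≤ ∑ v, degTuple G v * w v := hle
    _ ≤ ∑ i ∈ Icc 1 (2 * k), ithLargest (degTuple G) i :=
        sum_mul_le_sum_ithLargest h2kn (fun v ↦ Nat.cast_nonneg _) hw₀ hw₁ (by exact_mod_cast hw)
end

section
/- Let G = (V,E) be a finite simple graph with |V| = n, and let k be an integer with 1 ≤ k ≤ n−1. Then ∑_{i=1}^{k} λ_i(L(G)) ≤ |E| + C(k+1, 2) + min{ C(n−k−1, 2), C(k, 2) }, where C(a,b) denotes the binomial coefficient a choose b. -/
open Finset

/-!
A sum of `k` eigenvalues of the Laplacian `L` is `tr (L P)` for a projection `P` of trace `k`.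

Let `R` be symmetric with `R² ≤ R` and trace `τ`. Then `tr (L R) - |E|` is the sum over the edges
`uw` of `R u u + R w w - 2 R u w - 1`, and each such term is at most
`l R u u R w w + (φ u + φ w) (R u w)²` for suitable row weights `φ`, as soon as `l ≥ 4 / 3`.
Summing this over *all* pairs, with `∑_{w ≠ u} (R u w)² ≤ R u u (1 - R u u)` in each row, gives
`tr (L R) ≤ |E| + τ (l τ + 1) / 2`, which for `l = 2 - 1 / τ` is `|E| + τ²`. With `R = P` this is
the bound by `|E| + C(k+1, 2) + C(k, 2)`.

For the other bound apply the same inequality to the complement graph, whose Laplacian is `n - L`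
on the orthogonal complement of the constant vectors, and to the compression of `1 - P` to that
subspace. Its trace is `n - k - 1 + θ` with `0 ≤ θ ≤ 1`, and the terms in `θ` have the right sign
when `n - k - 1 ≤ k`. Traces too small for `l ≥ 4 / 3` are covered by `L ≤ |E| + 1` and
`tr L = 2 |E|`.
-/

theorem exists_sum_ithLargest_eq {n : ℕ} (f : Fin n → ℝ) {k : ℕ} (hk : k ≤ n) :
    ∃ I : Finset (Fin n), #I = k ∧ ∑ i ∈ Icc 1 k, ithLargest f i = ∑ i ∈ I, f i := by
  let top : Fin k ↪ Fin n :=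
    (Fin.castLEEmb hk).trans (Fin.revPerm.trans (Tuple.sort f)).toEmbedding
  refine ⟨univ.map top, by simp, ?_⟩
  calc ∑ i ∈ Icc 1 k, ithLargest f i
    _ = ∑ i ∈ range k, ithLargest f (i + 1) := by
      rw [range_eq_Ico, sum_Ico_add' (ithLargest f), zero_add, Ico_add_one_right_eq_Icc]
    _ = ∑ j : Fin k, f (top j) := by
      rw [← Fin.sum_univ_eq_sum_range]
      exact sum_congr rfl fun j _ ↦ dif_pos ⟨by omega, by omega⟩
    _ = ∑ i ∈ univ.map top, f i := (sum_map ..).symm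

theorem sum_sum_erase_add_mul {ι K : Type*} [Fintype ι] [DecidableEq ι] [CommSemiring K]
    (f : ι → K) {g : ι → ι → K} (hg : ∀ u w, g u w = g w u) :
    ∑ u, ∑ w ∈ univ.erase u, (f u + f w) * g u w = ∑ u, 2 * f u * ∑ w ∈ univ.erase u, g u w := by
  have hswap : ∑ u, ∑ w ∈ univ.erase u, f w * g u w = ∑ u, ∑ w ∈ univ.erase u, f u * g u w := by
    rw [sum_comm' (t' := univ) (s' := fun w ↦ univ.erase w) (by simp [eq_comm])]
    simp only [hg]
  simp only [add_mul, sum_add_distrib, hswap, ← mul_sum, two_mul]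

theorem compression_mul_self_le {A : Type*} [Ring A] [StarRing A] [PartialOrder A]
    [StarOrderedRing A] {P Q : A} (hP : IsStarProjection P) (hQ : IsStarProjection Q) :
    (Q * P * Q) * (Q * P * Q) ≤ Q * P * Q := by
  have hPP : P * P = P := hP.isIdempotentElem
  have hQQ : Q * Q = Q := hQ.isIdempotentElem
  calc (Q * P * Q) * (Q * P * Q)
    _ = Q * P * Q * P * Q := by simp only [← mul_assoc, mul_assoc _ Q Q, hQQ]
    _ = Q * P * Q * star (Q * P) := by
      rw [star_mul, hP.isSelfAdjoint.star_eq, hQ.isSelfAdjoint.star_eq, ← mul_assoc]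
    _ ≤ Q * P * 1 * star (Q * P) :=
      star_right_conjugate_le_conjugate (sub_nonneg.mp hQ.one_sub.nonneg) _
    _ = Q * P * Q := by
      rw [star_mul, hP.isSelfAdjoint.star_eq, hQ.isSelfAdjoint.star_eq, mul_one, ← mul_assoc,
        mul_assoc Q P P, hPP]

section Trace

open Matrix
open scoped MatrixOrder ComplexOrder

variable {ι 𝕜 : Type*} [Fintype ι] [RCLike 𝕜]

theorem trace_mul_nonneg {A B : Matrix ι ι 𝕜} (hA : 0 ≤ A) (hB : 0 ≤ B) :
    0 ≤ (A * B).trace := by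
  classical
  obtain ⟨C, rfl⟩ := CStarAlgebra.nonneg_iff_eq_star_mul_self.mp hB
  rw [← mul_assoc, trace_mul_comm, ← mul_assoc]
  exact ((nonneg_iff_posSemidef.mp hA).mul_mul_conjTranspose_same C).trace_nonneg

theorem trace_mul_le_trace_mul_of_le_left {A B C : Matrix ι ι 𝕜} (hAB : A ≤ B) (hC : 0 ≤ C) :
    (A * C).trace ≤ (B * C).trace := by
  simpa only [sub_mul, trace_sub, sub_nonneg] using trace_mul_nonneg (sub_nonneg.mpr hAB) hC

theorem trace_mul_le_trace {A P : Matrix ι ι 𝕜} (hA : 0 ≤ A) (hP : IsStarProjection P) :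
    (A * P).trace ≤ A.trace := by
  classical
  have h := trace_mul_le_trace_mul_of_le_left (sub_nonneg.mp hP.one_sub.nonneg) hA
  rwa [one_mul, trace_mul_comm] at h

theorem exists_isStarProjection_trace_mul_eq_sum_eigenvalues [DecidableEq ι]
    {A : Matrix ι ι 𝕜} (hA : A.IsHermitian) (I : Finset ι) :
    ∃ P : Matrix ι ι 𝕜, IsStarProjection P ∧ P.trace = #I ∧
      (A * P).trace = ∑ i ∈ I, (hA.eigenvalues i : 𝕜) := by
  let conj := Unitary.conjStarAlgAut 𝕜 _ hA.eigenvectorUnitary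
  let D : Matrix ι ι 𝕜 := diagonal fun i ↦ if i ∈ I then 1 else 0
  have hD : IsStarProjection D :=
    ⟨by simp [IsIdempotentElem, D],
      by simp [IsSelfAdjoint, D, star_eq_conjTranspose, Pi.star_def, apply_ite]⟩
  have trace_conj (M : Matrix ι ι 𝕜) : (conj M).trace = M.trace := by
    rw [Unitary.conjStarAlgAut_apply, trace_mul_cycle, Unitary.coe_star_mul_self, one_mul]
  refine ⟨conj D, hD.map conj, by simp [trace_conj, D], ?_⟩
  conv_lhs => rw [hA.spectral_theorem]
  rw [← map_mul, trace_conj]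
  simp [D]

theorem sum_sq_le_diag {R : Matrix ι ι ℝ} (hR : R.IsHermitian) (hRR : R * R ≤ R) (u : ι) :
    ∑ w, R u w ^ 2 ≤ R u u := by
  have hdiag : 0 ≤ R u u - (R * R) u u := (le_iff.mp hRR).diag_nonneg
  have hsq : (R * R) u u = ∑ w, R u w ^ 2 :=
    sum_congr rfl fun w _ ↦ by rw [sq]; congr 1; exact hR.apply u w
  linarith

theorem sum_erase_sq_le_diag_mul_one_sub_diag [DecidableEq ι] {R : Matrix ι ι ℝ}
    (hR : R.IsHermitian) (hRR : R * R ≤ R) (u : ι) :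
    ∑ w ∈ univ.erase u, R u w ^ 2 ≤ R u u * (1 - R u u) := by
  linarith [sum_sq_le_diag hR hRR u, add_sum_erase univ (R u · ^ 2) (mem_univ u)]

theorem sq_le_diag_mul_one_sub_diag {R : Matrix ι ι ℝ}
    (hR : R.IsHermitian) (hRR : R * R ≤ R) {u w : ι} (huw : u ≠ w) :
    R u w ^ 2 ≤ R u u * (1 - R u u) := by
  classical
  exact (single_le_sum (f := fun w ↦ R u w ^ 2) (fun _ _ ↦ sq_nonneg _)
    (mem_erase.mpr ⟨huw.symm, mem_univ w⟩)).trans (sum_erase_sq_le_diag_mul_one_sub_diag hR hRR u)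

theorem diag_mem_Icc_of_mul_self_le {R : Matrix ι ι ℝ}
    (hR : R.IsHermitian) (hRR : R * R ≤ R) (u : ι) : R u u ∈ Set.Icc 0 1 := by
  classical
  have h : 0 ≤ R u u * (1 - R u u) :=
    (sum_nonneg fun _ _ ↦ sq_nonneg _).trans (sum_erase_sq_le_diag_mul_one_sub_diag hR hRR u)
  exact ⟨by nlinarith, by nlinarith⟩

end Trace

section PairBound

/-- The weight given to the squared off-diagonal entries of a row with diagonal entry `a`: for
`0 < a < 1` the largest `w` with `2 * w * (a * (1 - a)) ≤ a * (1 + l * a)`. At `a = 1`, where the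
off-diagonal entries vanish, it takes the junk value `0`. -/
noncomputable def rowWeight (l a : ℝ) : ℝ := (1 + l * a) / (2 * (1 - a))

theorem rowWeight_nonneg {l a : ℝ} (hl : 0 ≤ l) (ha₀ : 0 ≤ a) (ha₁ : a ≤ 1) :
    0 ≤ rowWeight l a :=
  div_nonneg (by positivity) (by linarith)

theorem two_mul_rowWeight_mul_le {l a : ℝ} (hl : 0 ≤ l) (ha₀ : 0 ≤ a) (ha₁ : a ≤ 1) :
    2 * rowWeight l a * (a * (1 - a)) ≤ a * (1 + l * a) := by
  rcases ha₁.eq_or_lt with rfl | ha₁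
  · simp only [rowWeight, sub_self, mul_zero]; linarith
  · have : 1 - a ≠ 0 := by linarith
    rw [rowWeight]
    exact le_of_eq (by field_simp)

theorem two_mul_one_sub_mul_one_sub_le {a b l : ℝ} (hl : 4 / 3 ≤ l) (ha₀ : 0 ≤ a)
    (hb₀ : 0 ≤ b) (ha₁ : a ≤ 1) (hb₁ : b ≤ 1) :
    2 * ((1 - a) * (1 - b)) ≤
      (1 - a - b + l * (a * b)) * ((1 + l * a) * (1 - b) + (1 + l * b) * (1 - a)) := by
  -- With `p = a b`, `q = (1 - a) (1 - b)` and `s = 1 - p - q`, the difference of the two sides is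
  -- `(l - 1) (s (p + q) - 4 p q) + (l - 1) l s p + (6 l - 8) p q`.
  have ha : 0 ≤ 1 - a := by linarith
  have hb : 0 ≤ 1 - b := by linarith
  have hl₁ : 0 ≤ l - 1 := by linarith
  have hl₂ : 0 ≤ 6 * l - 8 := by linarith
  have hl₀ : 0 ≤ l := by linarith
  have hamgm : 0 ≤ (a * (1 - b) + b * (1 - a)) * (a * b + (1 - a) * (1 - b)) -
      4 * (a * b * ((1 - a) * (1 - b))) :=
    calc 0 ≤ a * (1 - a) * (b - (1 - b)) ^ 2 + b * (1 - b) * (a - (1 - a)) ^ 2 :=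
          add_nonneg (mul_nonneg (mul_nonneg ha₀ ha) (sq_nonneg _))
            (mul_nonneg (mul_nonneg hb₀ hb) (sq_nonneg _))
      _ = _ := by ring
  have hsp : 0 ≤ (a * (1 - b) + b * (1 - a)) * (a * b) :=
    mul_nonneg (add_nonneg (mul_nonneg ha₀ hb) (mul_nonneg hb₀ ha)) (mul_nonneg ha₀ hb₀)
  have hpq : 0 ≤ a * b * ((1 - a) * (1 - b)) :=
    mul_nonneg (mul_nonneg ha₀ hb₀) (mul_nonneg ha hb)
  linear_combination mul_nonneg hl₁ hamgm + mul_nonneg (mul_nonneg hl₁ hl₀) hsp +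
    mul_nonneg hl₂ hpq

theorem one_le_mul_rowWeight_add_rowWeight {a b l : ℝ} (hl : 4 / 3 ≤ l) (ha₀ : 0 ≤ a)
    (hb₀ : 0 ≤ b) (ha₁ : a < 1) (hb₁ : b < 1) :
    1 ≤ (1 - a - b + l * (a * b)) * (rowWeight l a + rowWeight l b) := by
  have ha : 0 < 1 - a := by linarith
  have hb : 0 < 1 - b := by linarith
  have hsum : rowWeight l a + rowWeight l b =
      ((1 + l * a) * (1 - b) + (1 + l * b) * (1 - a)) / (2 * ((1 - a) * (1 - b))) := by
    rw [rowWeight, rowWeight]; field_simp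
  rw [hsum, ← mul_div_assoc, one_le_div (by positivity)]
  exact two_mul_one_sub_mul_one_sub_le hl ha₀ hb₀ ha₁.le hb₁.le

theorem add_sub_two_mul_sub_one_le {a b l r : ℝ} (hl : 4 / 3 ≤ l) (har : r ^ 2 ≤ a * (1 - a))
    (hbr : r ^ 2 ≤ b * (1 - b)) :
    a + b - 2 * r - 1 ≤ l * (a * b) + (rowWeight l a + rowWeight l b) * r ^ 2 := by
  have ha : 0 ≤ a ∧ a ≤ 1 := ⟨by nlinarith, by nlinarith⟩
  have hb : 0 ≤ b ∧ b ≤ 1 := ⟨by nlinarith, by nlinarith⟩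
  by_cases h : a = 1 ∨ b = 1
  · have hr : r = 0 := by
      rcases h with rfl | rfl <;> exact pow_eq_zero_iff two_ne_zero |>.mp (by nlinarith)
    subst hr
    rcases h with rfl | rfl <;> nlinarith
  · push Not at h
    have ha₁ := ha.2.lt_of_ne h.1
    have hb₁ := hb.2.lt_of_ne h.2
    have hdisc := one_le_mul_rowWeight_add_rowWeight hl ha.1 hb.1 ha₁ hb₁
    set F := rowWeight l a + rowWeight l b
    have hF : 0 ≤ F :=
      add_nonneg (rowWeight_nonneg (by linarith) ha.1 ha.2)
        (rowWeight_nonneg (by linarith) hb.1 hb.2)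
    have hF₀ : 0 < F := hF.lt_of_ne fun h ↦ by rw [← h, mul_zero] at hdisc; linarith
    have hsq : 0 ≤ F * (F * r ^ 2 + 2 * r + (1 - a - b + l * (a * b))) := by
      nlinarith [sq_nonneg (F * r + 1)]
    linarith [nonneg_of_mul_nonneg_right hsq hF₀]

end PairBound

section Laplacian

open Matrix SimpleGraph
open scoped MatrixOrder

theorem degree_add_degree_le_card_edgeFinset_add_one {V : Type*} [Fintype V]
    (G : SimpleGraph V) [DecidableRel G.Adj] {u v : V} (h : G.Adj u v) :
    G.degree u + G.degree v ≤ #G.edgeFinset + 1 := by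
  classical
  have hinter : G.incidenceFinset u ∩ G.incidenceFinset v = {s(u, v)} := by
    rw [← coe_inj]
    push_cast
    simpa using G.incidenceSet_inter_incidenceSet_of_adj h
  rw [← card_incidenceFinset_eq_degree, ← card_incidenceFinset_eq_degree,
    ← card_union_add_card_inter, hinter, card_singleton]
  gcongr
  exact union_subset (G.incidenceFinset_subset u) (G.incidenceFinset_subset v)

variable {V : Type*} [Fintype V] [DecidableEq V] (G : SimpleGraph V) [DecidableRel G.Adj]

theorem trace_lapMatrix {R : Type*} [Ring R] : (G.lapMatrix R).trace = 2 * #G.edgeFinset := by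
  rw [lapMatrix, trace_sub, trace_adjMatrix, sub_zero, degMatrix, trace_diagonal]
  exact_mod_cast congrArg (Nat.cast (R := R)) G.sum_degrees_eq_twice_card_edges

theorem two_mul_trace_lapMatrix_mul {K : Type*} [CommRing K] (R : Matrix V V K) :
    2 * (G.lapMatrix K * R).trace =
      ∑ u, ∑ w, if G.Adj u w then R u u + R w w - 2 * R u w else 0 := by
  have hdiag : ∑ u, ∑ w, (if G.Adj u w then R u u else 0) = (G.degMatrix K * R).trace := by
    simp only [trace, degMatrix, diag_apply, diagonal_mul, degree_eq_sum_if_adj, sum_mul, ite_mul,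
      one_mul, zero_mul]
  have hdiag' : ∑ u, ∑ w, (if G.Adj u w then R w w else 0) = (G.degMatrix K * R).trace := by
    rw [sum_comm, ← hdiag]; simp only [G.adj_comm]
  have hadj : ∑ u, ∑ w, (if G.Adj u w then R u w else 0) = (G.adjMatrix K * R).trace := by
    rw [sum_comm]
    simp only [trace, diag_apply, mul_apply, adjMatrix_apply, ite_mul, one_mul, zero_mul,
      G.adj_comm]
  calc 2 * (G.lapMatrix K * R).trace
    _ = (G.degMatrix K * R).trace + (G.degMatrix K * R).trace - 2 * (G.adjMatrix K * R).trace := by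
      rw [lapMatrix, sub_mul, trace_sub]; ring
    _ = ∑ u, ∑ w, if G.Adj u w then R u u + R w w - 2 * R u w else 0 := by
      nth_rw 1 [← hdiag]
      rw [← hdiag', ← hadj]
      simp only [mul_sum, ← sum_add_distrib, ← sum_sub_distrib]
      refine sum_congr rfl fun u _ ↦ sum_congr rfl fun w _ ↦ ?_
      split_ifs <;> ring

theorem card_edgeFinset_add_card_edgeFinset_compl :
    #G.edgeFinset + #Gᶜ.edgeFinset = (Fintype.card V).choose 2 := by
  rw [← card_union_of_disjoint (disjoint_edgeFinset.mpr disjoint_compl_right), ← edgeFinset_sup,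
    ← card_edgeFinset_top_eq_card_choose_two]
  congr!
  exact sup_compl_eq_top

theorem exists_adj_eigenvalue_le_degree_add_degree {x : V → ℝ} {μ : ℝ} (hμ : μ ≠ 0) (hx : x ≠ 0)
    (h : G.lapMatrix ℝ *ᵥ x = μ • x) :
    ∃ u v, G.Adj u v ∧ μ ≤ G.degree u + G.degree v := by
  have hlap (u : V) : μ * x u = ∑ w ∈ G.neighborFinset u, (x u - x w) := by
    have := congrFun h u
    rw [lapMatrix_mulVec_apply, Pi.smul_apply, smul_eq_mul] at this
    simp [← this, sum_sub_distrib]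
  obtain ⟨a, b, hab, hne⟩ : ∃ a b, G.Adj a b ∧ x a ≠ x b := by
    have : G.lapMatrix ℝ *ᵥ x ≠ 0 := h ▸ smul_ne_zero hμ hx
    simpa [lapMatrix_mulVec_eq_zero_iff_forall_adj] using this
  obtain ⟨⟨u, v⟩, huv, hmax⟩ := exists_max_image ({p | G.Adj p.1 p.2} : Finset (V × V))
    (fun p ↦ x p.1 - x p.2) ⟨(a, b), by simpa using hab⟩
  simp only [mem_filter_univ, Prod.forall] at huv hmax
  have hpos : 0 < x u - x v := by
    rcases hne.lt_or_gt with hlt | hlt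
    · linarith [hmax b a hab.symm]
    · linarith [hmax a b hab]
  have hu : μ * x u ≤ G.degree u * (x u - x v) := by
    rw [hlap, ← nsmul_eq_mul]
    exact sum_le_card_nsmul _ _ _ fun w hw ↦ hmax u w (by simpa using hw)
  have hv : -(μ * x v) ≤ G.degree v * (x u - x v) := by
    rw [hlap, ← sum_neg_distrib, ← nsmul_eq_mul]
    refine sum_le_card_nsmul _ _ _ fun w hw ↦ ?_
    rw [neg_sub]
    exact hmax w v ((G.mem_neighborFinset v w).mp hw).symm
  exact ⟨u, v, huv, le_of_mul_le_mul_right (by linarith) hpos⟩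

theorem lapMatrix_le_card_edgeFinset_add_one :
    G.lapMatrix ℝ ≤ algebraMap ℝ _ (#G.edgeFinset + 1) := by
  have hL := G.isHermitian_lapMatrix ℝ
  refine le_algebraMap_of_spectrum_le fun μ hμ ↦ ?_
  rw [hL.spectrum_real_eq_range_eigenvalues] at hμ
  obtain ⟨i, rfl⟩ := hμ
  by_cases h₀ : hL.eigenvalues i = 0
  · rw [h₀]; positivity
  have hne : ⇑(hL.eigenvectorBasis i) ≠ 0 := fun h ↦
    hL.eigenvectorBasis.orthonormal.ne_zero i (by ext j; exact congrFun h j)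
  obtain ⟨u, v, huv, hle⟩ :=
    exists_adj_eigenvalue_le_degree_add_degree G h₀ hne (hL.mulVec_eigenvectorBasis i)
  exact hle.trans (mod_cast degree_add_degree_le_card_edgeFinset_add_one G huv)

variable {R : Matrix V V ℝ}

theorem trace_lapMatrix_mul_le_card_edgeFinset_add_one_mul (hR : 0 ≤ R) :
    (G.lapMatrix ℝ * R).trace ≤ (#G.edgeFinset + 1) * R.trace := by
  have := trace_mul_le_trace_mul_of_le_left (lapMatrix_le_card_edgeFinset_add_one G) hR
  rwa [Algebra.algebraMap_eq_smul_one, smul_mul_assoc, one_mul, trace_smul, smul_eq_mul] at this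

theorem two_mul_trace_lapMatrix_mul_sub_two_mul_card_edgeFinset {K : Type*} [CommRing K]
    (R : Matrix V V K) :
    2 * (G.lapMatrix K * R).trace - 2 * #G.edgeFinset =
      ∑ u, ∑ w ∈ univ.erase u, if G.Adj u w then R u u + R w w - 2 * R u w - 1 else 0 := by
  have hcard : (2 * #G.edgeFinset : K) = ∑ u, ∑ w, if G.Adj u w then 1 else 0 := by
    simp only [← degree_eq_sum_if_adj]
    exact_mod_cast congrArg (Nat.cast (R := K)) G.sum_degrees_eq_twice_card_edges.symm
  rw [two_mul_trace_lapMatrix_mul, hcard, ← sum_sub_distrib]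
  refine sum_congr rfl fun u _ ↦ ?_
  rw [← sum_sub_distrib, ← add_sum_erase univ _ (mem_univ u)]
  simp only [G.irrefl, if_false, sub_self, zero_add]
  exact sum_congr rfl fun w _ ↦ by split_ifs <;> ring

theorem sum_sum_erase_rowWeight_le (hR : R.IsHermitian) (hRR : R * R ≤ R) {l : ℝ} (hl : 0 ≤ l) :
    ∑ u, ∑ w ∈ univ.erase u,
        (l * (R u u * R w w) + (rowWeight l (R u u) + rowWeight l (R w w)) * R u w ^ 2) ≤
      (l * R.trace + 1) * R.trace := by
  have hsymm (u w : V) : R u w ^ 2 = R w u ^ 2 := by rw [← hR.apply u w, star_trivial]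
  simp only [sum_add_distrib]
  rw [sum_sum_erase_add_mul (fun u ↦ rowWeight l (R u u)) hsymm, ← sum_add_distrib]
  conv_rhs => rw [trace, mul_sum]
  refine sum_le_sum fun u _ ↦ ?_
  obtain ⟨h₀, h₁⟩ := diag_mem_Icc_of_mul_self_le hR hRR u
  have hprod : ∑ w ∈ univ.erase u, l * (R u u * R w w) = l * (R u u * (R.trace - R u u)) := by
    rw [← mul_sum, ← mul_sum, sum_erase_eq_sub (mem_univ u)]; rfl
  have hrow : 2 * rowWeight l (R u u) * ∑ w ∈ univ.erase u, R u w ^ 2 ≤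
      R u u * (1 + l * R u u) := by
    refine le_trans ?_ (two_mul_rowWeight_mul_le hl h₀ h₁)
    have := rowWeight_nonneg hl h₀ h₁
    gcongr
    exact sum_erase_sq_le_diag_mul_one_sub_diag hR hRR u
  rw [hprod]
  change _ ≤ (l * R.trace + 1) * R u u
  linarith

theorem trace_lapMatrix_mul_le_card_edgeFinset_add_trace_sq (hR : R.IsHermitian)
    (hRR : R * R ≤ R) (htr : 3 / 2 ≤ R.trace) :
    (G.lapMatrix ℝ * R).trace ≤ #G.edgeFinset + R.trace ^ 2 := by
  set l : ℝ := 2 - R.trace⁻¹ with hl_def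
  have hl : 4 / 3 ≤ l := by
    have : R.trace⁻¹ ≤ (3 / 2)⁻¹ := by gcongr
    linarith
  have hl_mul : l * R.trace + 1 = 2 * R.trace := by
    rw [hl_def]; field_simp [show R.trace ≠ 0 by linarith]; ring
  have hexcess : 2 * (G.lapMatrix ℝ * R).trace - 2 * #G.edgeFinset ≤
      (l * R.trace + 1) * R.trace := by
    rw [two_mul_trace_lapMatrix_mul_sub_two_mul_card_edgeFinset]
    refine le_trans (sum_le_sum fun u _ ↦ sum_le_sum fun w hw ↦ ?_)
      (sum_sum_erase_rowWeight_le hR hRR (l := l) (by linarith))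
    have huw : u ≠ w := (ne_of_mem_erase hw).symm
    obtain ⟨hu₀, hu₁⟩ := diag_mem_Icc_of_mul_self_le hR hRR u
    obtain ⟨hw₀, hw₁⟩ := diag_mem_Icc_of_mul_self_le hR hRR w
    split_ifs
    · refine add_sub_two_mul_sub_one_le hl (sq_le_diag_mul_one_sub_diag hR hRR huw) ?_
      rw [← hR.apply, star_trivial]
      exact sq_le_diag_mul_one_sub_diag hR hRR huw.symm
    · have := rowWeight_nonneg (l := l) (by linarith) hu₀ hu₁
      have := rowWeight_nonneg (l := l) (by linarith) hw₀ hw₁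
      positivity
  rw [hl_mul] at hexcess
  linarith

theorem trace_lapMatrix_mul_le_card_edgeFinset_add_sq {k : ℕ} (hR : IsStarProjection R)
    (htr : R.trace = k) : (G.lapMatrix ℝ * R).trace ≤ #G.edgeFinset + (k : ℝ) ^ 2 := by
  rcases le_or_gt k 1 with hk | hk
  · have h := trace_lapMatrix_mul_le_card_edgeFinset_add_one_mul G hR.nonneg
    rw [htr] at h
    interval_cases k <;> push_cast at h ⊢ <;> linarith [(#G.edgeFinset).cast_nonneg (α := ℝ)]
  · rw [← htr]
    refine trace_lapMatrix_mul_le_card_edgeFinset_add_trace_sq G hR.isSelfAdjoint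
      hR.isIdempotentElem.eq.le ?_
    have : (2 : ℝ) ≤ k := mod_cast hk
    linarith

theorem trace_lapMatrix_mul_le_two_mul_card_edgeFinset (hR : IsStarProjection R) :
    (G.lapMatrix ℝ * R).trace ≤ 2 * #G.edgeFinset :=
  (trace_mul_le_trace (G.posSemidef_lapMatrix ℝ).nonneg hR).trans_eq (trace_lapMatrix G)

end Laplacian

section Complement

open Matrix SimpleGraph
open scoped MatrixOrder

variable {V : Type*} [Fintype V] {P : Matrix V V ℝ} {k m : ℕ}

variable (V) in
/-- The orthogonal projection of `ℝ^V` onto the constant vectors, with all entries equal to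
`1 / |V|`. The centering projection `1 - averagingMatrix V` is `|V|⁻¹` times the Laplacian of the
complete graph. -/
noncomputable def averagingMatrix : Matrix V V ℝ := of fun _ _ ↦ (Fintype.card V : ℝ)⁻¹

theorem isStarProjection_averagingMatrix : IsStarProjection (averagingMatrix V) := by
  refine ⟨?_, ?_⟩
  · ext u w
    have : (Fintype.card V : ℝ) ≠ 0 := Nat.cast_ne_zero.mpr (Fintype.card_pos_iff.mpr ⟨u⟩).ne'
    simp [averagingMatrix, mul_apply, this]
  · ext u w
    simp [averagingMatrix, star_apply]

theorem trace_averagingMatrix [Nonempty V] : (averagingMatrix V).trace = 1 := by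
  simp [averagingMatrix, trace]

theorem trace_averagingMatrix_mul_mem_Icc [Nonempty V] (hP : IsStarProjection P) :
    (averagingMatrix V * P).trace ∈ Set.Icc 0 1 :=
  ⟨trace_mul_nonneg isStarProjection_averagingMatrix.nonneg hP.nonneg,
    trace_averagingMatrix (V := V) ▸
      trace_mul_le_trace isStarProjection_averagingMatrix.nonneg hP⟩

variable [DecidableEq V]

/-- The compression of `1 - P` to the orthogonal complement of the constant vectors. When `P` is a
star projection this satisfies `Q * Q ≤ Q`, but it is a projection only if `P` commutes with
`averagingMatrix V`. It takes over the role of `P` on passing to the complement graph. -/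
noncomputable def centeredCompl (P : Matrix V V ℝ) : Matrix V V ℝ :=
  (1 - averagingMatrix V) * (1 - P) * (1 - averagingMatrix V)

theorem centeredCompl_nonneg (hP : IsStarProjection P) :
    0 ≤ centeredCompl P :=
  isStarProjection_averagingMatrix.one_sub.isSelfAdjoint.conjugate_nonneg hP.one_sub.nonneg

theorem centeredCompl_mul_self_le (hP : IsStarProjection P) :
    centeredCompl P * centeredCompl P ≤ centeredCompl P :=
  compression_mul_self_le hP.one_sub isStarProjection_averagingMatrix.one_sub

theorem trace_centeredCompl [Nonempty V] (P : Matrix V V ℝ) :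
    (centeredCompl P).trace = Fintype.card V - 1 - P.trace + (averagingMatrix V * P).trace := by
  rw [centeredCompl, trace_mul_cycle,
    isStarProjection_averagingMatrix.one_sub.isIdempotentElem.eq, sub_mul, one_mul, mul_sub,
    mul_one, trace_sub, trace_sub, trace_sub, trace_one, trace_averagingMatrix]
  ring

variable (G : SimpleGraph V) [DecidableRel G.Adj]

theorem lapMatrix_mul_averagingMatrix : G.lapMatrix ℝ * averagingMatrix V = 0 := by
  ext u w
  have h := congrFun (G.lapMatrix_mulVec_const_eq_zero (R := ℝ)) u
  simp only [mulVec, dotProduct, mul_one, Pi.zero_apply] at h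
  simp [averagingMatrix, mul_apply, ← sum_mul, h]

theorem averagingMatrix_mul_lapMatrix : averagingMatrix V * G.lapMatrix ℝ = 0 := by
  have h := congrArg star (lapMatrix_mul_averagingMatrix G)
  rwa [star_mul, isStarProjection_averagingMatrix.isSelfAdjoint.star_eq,
    star_eq_conjTranspose, (G.isHermitian_lapMatrix ℝ).eq, star_zero] at h

theorem lapMatrix_add_lapMatrix_compl :
    G.lapMatrix ℝ + Gᶜ.lapMatrix ℝ = (Fintype.card V : ℝ) • (1 - averagingMatrix V) := by
  ext u w
  have hcard : (Fintype.card V : ℝ) ≠ 0 := Nat.cast_ne_zero.mpr (Fintype.card_pos_iff.mpr ⟨u⟩).ne'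
  rcases eq_or_ne u w with rfl | huw
  · have hdeg : (G.degree u + Gᶜ.degree u : ℝ) = Fintype.card V - 1 := by
      have hlt := G.degree_lt_card_verts u
      rw [G.degree_compl, eq_sub_iff_add_eq]
      norm_cast
      omega
    simp [lapMatrix, degMatrix, averagingMatrix, mul_sub, hcard, hdeg]
  · by_cases hadj : G.Adj u w <;>
      simp [lapMatrix, degMatrix, averagingMatrix, huw, hadj, hcard]

theorem trace_lapMatrix_mul_centeredCompl (P : Matrix V V ℝ) :
    (G.lapMatrix ℝ * centeredCompl P).trace =
      2 * #G.edgeFinset - (G.lapMatrix ℝ * P).trace := by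
  rw [centeredCompl, ← mul_assoc, trace_mul_comm, ← mul_assoc, ← mul_assoc,
    sub_mul _ _ (G.lapMatrix ℝ), one_mul, averagingMatrix_mul_lapMatrix, sub_zero,
    mul_sub _ _ (averagingMatrix V), mul_one, lapMatrix_mul_averagingMatrix, sub_zero, mul_sub,
    mul_one, trace_sub, trace_lapMatrix]

theorem trace_lapMatrix_mul_eq_compl (P : Matrix V V ℝ) :
    (G.lapMatrix ℝ * P).trace =
      Fintype.card V * (P.trace - (averagingMatrix V * P).trace) - 2 * #Gᶜ.edgeFinset +
        (Gᶜ.lapMatrix ℝ * centeredCompl P).trace := by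
  have hsum := congrArg (fun M ↦ (M * P).trace) (lapMatrix_add_lapMatrix_compl G)
  simp only [add_mul, sub_mul, one_mul, smul_mul_assoc, trace_add, trace_smul, trace_sub,
    smul_eq_mul] at hsum
  rw [trace_lapMatrix_mul_centeredCompl]
  linarith

theorem cast_card_edgeFinset_compl (hcard : Fintype.card V = k + m + 1) :
    (#Gᶜ.edgeFinset : ℝ) = (k + m + 1) * (k + m) / 2 - #G.edgeFinset := by
  have h := congrArg (Nat.cast (R := ℝ)) (card_edgeFinset_add_card_edgeFinset_compl G)
  rw [hcard, Nat.cast_choose_two] at h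
  push_cast at h
  linarith

theorem trace_lapMatrix_mul_le_of_card_eq_of_two_le (hP : IsStarProjection P) (htr : P.trace = k)
    (hcard : Fintype.card V = k + m + 1) (hm : 2 ≤ m) (hmk : m ≤ k) :
    (G.lapMatrix ℝ * P).trace ≤ #G.edgeFinset + (k + 1).choose 2 + m.choose 2 := by
  have : Nonempty V := Fintype.card_pos_iff.mp (by omega)
  obtain ⟨hθ₀, hθ₁⟩ := trace_averagingMatrix_mul_mem_Icc hP
  have hdual := trace_lapMatrix_mul_eq_compl G P
  have htrQ := trace_centeredCompl P
  rw [htr, hcard] at hdual htrQ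
  rw [cast_card_edgeFinset_compl G hcard] at hdual
  push_cast at hdual htrQ
  set θ := (averagingMatrix V * P).trace
  have hm' : (2 : ℝ) ≤ m := mod_cast hm
  have hmk' : (m : ℝ) ≤ k := mod_cast hmk
  have hcompl := trace_lapMatrix_mul_le_card_edgeFinset_add_trace_sq Gᶜ
    (nonneg_iff_posSemidef.mp (centeredCompl_nonneg hP)).isHermitian
    (centeredCompl_mul_self_le hP) (by linarith)
  rw [htrQ, cast_card_edgeFinset_compl G hcard] at hcompl
  have hθ : 0 ≤ θ * (k - m + 1 - θ) := mul_nonneg hθ₀ (by linarith)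
  rw [Nat.cast_choose_two, Nat.cast_choose_two]
  push_cast
  linarith

theorem trace_lapMatrix_mul_le_of_card_eq_add_two (hP : IsStarProjection P) (htr : P.trace = k)
    (hcard : Fintype.card V = k + 1 + 1) (hdense : (k + 1).choose 2 ≤ #G.edgeFinset) :
    (G.lapMatrix ℝ * P).trace ≤ #G.edgeFinset + (k + 1).choose 2 := by
  have : Nonempty V := Fintype.card_pos_iff.mp (by omega)
  obtain ⟨hθ₀, -⟩ := trace_averagingMatrix_mul_mem_Icc hP
  have hdual := trace_lapMatrix_mul_eq_compl G P
  have htrQ := trace_centeredCompl P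
  rw [htr, hcard] at hdual htrQ
  push_cast at hdual htrQ
  set θ := (averagingMatrix V * P).trace
  have hcompl := trace_lapMatrix_mul_le_card_edgeFinset_add_one_mul Gᶜ (centeredCompl_nonneg hP)
  have hdense' : ((k + 1).choose 2 : ℝ) ≤ #G.edgeFinset := mod_cast hdense
  have hedges := cast_card_edgeFinset_compl G hcard
  rw [Nat.cast_choose_two] at hdense' ⊢
  push_cast at hdense' hedges ⊢
  have hθ : 0 ≤ θ * (k + 1 - #Gᶜ.edgeFinset) := mul_nonneg hθ₀ (by linarith)
  rw [htrQ] at hcompl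
  linarith

theorem trace_lapMatrix_mul_le_of_card_eq (hP : IsStarProjection P) (htr : P.trace = k)
    (hcard : Fintype.card V = k + m + 1) (hmk : m ≤ k) :
    (G.lapMatrix ℝ * P).trace ≤ #G.edgeFinset + (k + 1).choose 2 + m.choose 2 := by
  have of_sparse (h : #G.edgeFinset ≤ (k + 1).choose 2) :
      (G.lapMatrix ℝ * P).trace ≤ #G.edgeFinset + (k + 1).choose 2 + m.choose 2 := by
    have : (#G.edgeFinset : ℝ) ≤ (k + 1).choose 2 := mod_cast h
    linarith [trace_lapMatrix_mul_le_two_mul_card_edgeFinset G hP,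
      (m.choose 2).cast_nonneg (α := ℝ)]
  rcases le_total #G.edgeFinset ((k + 1).choose 2) with hsparse | hdense
  · exact of_sparse hsparse
  rcases m with _ | _ | m
  · exact of_sparse <| Nat.le.intro <|
      (card_edgeFinset_add_card_edgeFinset_compl G).trans (by rw [hcard, add_zero])
  · simpa using trace_lapMatrix_mul_le_of_card_eq_add_two G hP htr hcard hdense
  · exact trace_lapMatrix_mul_le_of_card_eq_of_two_le G hP htr hcard (by omega) hmk

theorem trace_lapMatrix_mul_le_choose (hP : IsStarProjection P) (htr : P.trace = k)
    (hk : k < Fintype.card V) :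
    (G.lapMatrix ℝ * P).trace ≤ #G.edgeFinset + (k + 1).choose 2 +
      min ((Fintype.card V - k - 1).choose 2 : ℝ) (k.choose 2) := by
  obtain ⟨m, hcard⟩ : ∃ m, Fintype.card V = k + m + 1 := ⟨Fintype.card V - k - 1, by omega⟩
  rw [hcard, show k + m + 1 - k - 1 = m by omega]
  rcases le_total m k with hmk | hkm
  · rw [min_eq_left (mod_cast Nat.choose_le_choose 2 hmk)]
    exact trace_lapMatrix_mul_le_of_card_eq G hP htr hcard hmk
  · rw [min_eq_right (mod_cast Nat.choose_le_choose 2 hkm)]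
    refine (trace_lapMatrix_mul_le_card_edgeFinset_add_sq G hP htr).trans_eq ?_
    rw [Nat.cast_choose_two, Nat.cast_choose_two]
    push_cast
    ring

end Complement

theorem sum_lapEigs_le_choose_bound_general {V : Type*} [Fintype V] [DecidableEq V]
    (G : SimpleGraph V) [DecidableRel G.Adj] (I : Finset V) (hI : #I < Fintype.card V) :
    ∑ i ∈ I, (G.posSemidef_lapMatrix ℝ).isHermitian.eigenvalues i ≤
      #G.edgeFinset + (#I + 1).choose 2 +
        min ((Fintype.card V - #I - 1).choose 2 : ℝ) ((#I).choose 2) := by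
  obtain ⟨P, hP, htr, hsum⟩ := exists_isStarProjection_trace_mul_eq_sum_eigenvalues
    (G.posSemidef_lapMatrix ℝ).isHermitian I
  simpa only [hsum, RCLike.ofReal_real_eq_id, id] using trace_lapMatrix_mul_le_choose G hP htr hI

/-- for a graph `G` on `n` vertices and `1 ≤ k ≤ n-1`,
`∑_{i=1}^k λ_i(L(G)) ≤ |E| + C(k+1,2) + min{C(n−k−1,2), C(k,2)}`. -/
theorem sum_lapEigs_le_choose_bound {n : ℕ} (G : SimpleGraph (Fin n)) [DecidableRel G.Adj]
    (k : ℕ) (hk1 : 1 ≤ k) (hk2 : k ≤ n - 1) :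
    ∑ i ∈ Finset.Icc 1 k, ithLargest (lapEigs G) i ≤
      (G.edgeFinset.card : ℝ) + ((k + 1).choose 2 : ℝ) +
        min ((n - k - 1).choose 2 : ℝ) ((k.choose 2 : ℝ)) := by
  obtain ⟨I, rfl, hsum⟩ := exists_sum_ithLargest_eq (lapEigs G) (show k ≤ n by omega)
  rw [hsum]
  simpa only [lapEigs, Fintype.card_fin] using
    sum_lapEigs_le_choose_bound_general G I (by rw [Fintype.card_fin]; omega)
end

section
/- Let G = (V,E) be a finite simple graph with |V| = n, and let k be an integer with 1 ≤ k ≤ n/2. Then ∑_{i=1}^{k} λ_i(L(G)) ≤ |E| + max{ |E(G[S])| : S ⊆ V, |S| = 2k }, where G[S] denotes the subgraph of G induced by S and E(G[S]) its edge set. -/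
open Finset

/-!
Let `x_i` be orthonormal eigenvectors of the Laplacian for eigenvalues `λ_i ≥ 0`, and let `T` be a
set of `k` indices. The weights `w_v = ∑_{i ∈ T} λ_i x_i(v)²` add up to `∑_{i ∈ T} λ_i`, and
`w_v ≤ L_{vv} = deg v`. Cauchy–Schwarz over the neighbours of each vertex gives
`∑_v (L x)_v² / deg v ≤ 2 xᵀ L x`; for a unit eigenvector this says `∑_v λ_i x_i(v)² / deg v ≤ 2`,
whence `∑_v w_v / deg v ≤ 2k`. The fractions `w_v / deg v ∈ [0, 1]` are thus a feasible solution of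
a fractional knapsack problem, so `∑_v w_v` is at most the sum of the `2k` largest degrees.
A degree sum over `S` counts each edge at most once, plus once more if the edge lies inside `S`.
-/

section Knapsack

variable {ι : Type*} [Fintype ι]

lemma exists_card_eq_forall_notMem_le {α : Type*} [LinearOrder α] (f : ι → α) {m : ℕ}
    (hm : m ≤ Fintype.card ι) :
    ∃ S : Finset ι, #S = m ∧ ∀ u ∈ S, ∀ v ∉ S, f v ≤ f u := by
  classical
  induction m with
  | zero => exact ⟨∅, by simp⟩
  | succ m ih =>
    obtain ⟨S, hcard, hS⟩ := ih (by omega)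
    have hne : Sᶜ.Nonempty := by
      rw [← card_pos, card_compl]
      omega
    obtain ⟨w, hw, hmax⟩ := exists_max_image Sᶜ f hne
    rw [mem_compl] at hw
    refine ⟨insert w S, by rw [card_insert_of_notMem hw, hcard], fun u hu v hv ↦ ?_⟩
    rw [mem_insert, not_or] at hv
    obtain rfl | hu := mem_insert.1 hu
    · exact hmax v (mem_compl.2 hv.2)
    · exact hS u hu v hv.2

variable {R : Type*} [CommRing R] [LinearOrder R] [IsStrictOrderedRing R]

lemma exists_card_eq_sum_mul_le_sum {c d : ι → R} {m : ℕ} (hm : m ≤ Fintype.card ι)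
    (hd : ∀ v, 0 ≤ d v) (hc₀ : ∀ v, 0 ≤ c v) (hc₁ : ∀ v, c v ≤ 1) (hc : ∑ v, c v ≤ m) :
    ∃ S : Finset ι, #S = m ∧ ∑ v, c v * d v ≤ ∑ v ∈ S, d v := by
  classical
  obtain ⟨S, hcard, hS⟩ := exists_card_eq_forall_notMem_le d hm
  refine ⟨S, hcard, ?_⟩
  obtain ⟨t, ht₀, ht_le, hle_t⟩ :
      ∃ t, 0 ≤ t ∧ (∀ u ∈ S, t ≤ d u) ∧ ∀ v ∉ S, d v ≤ t :=
    ⟨Sᶜ.fold max 0 d, (le_fold_max _).2 (.inl le_rfl),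
      fun u hu ↦ (fold_max_le _).2 ⟨hd u, fun v hv ↦ hS u hu v (mem_compl.1 hv)⟩,
      fun v hv ↦ (le_fold_max _).2 (.inr ⟨v, mem_compl.2 hv, le_rfl⟩)⟩
  have excess_le (v : ι) : c v * (d v - t) ≤ if v ∈ S then d v - t else 0 := by
    split_ifs with hv
    · exact mul_le_of_le_one_left (sub_nonneg.2 (ht_le v hv)) (hc₁ v)
    · exact mul_nonpos_of_nonneg_of_nonpos (hc₀ v) (sub_nonpos.2 (hle_t v hv))
  calc ∑ v, c v * d v
      = ∑ v, c v * (d v - t) + (∑ v, c v) * t := by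
        rw [sum_mul, ← sum_add_distrib]
        exact sum_congr rfl fun v _ ↦ by ring
    _ ≤ ∑ v ∈ S, (d v - t) + m * t := by
        gcongr
        exact (sum_le_sum fun v _ ↦ excess_le v).trans_eq (by simp)
    _ = ∑ v ∈ S, d v := by simp [sum_sub_distrib, hcard]

end Knapsack

section SpectralDiag

open RCLike
open scoped ComplexOrder

variable {ι 𝕜 : Type*} [RCLike 𝕜] [Fintype ι] [DecidableEq ι] {A : Matrix ι ι 𝕜}

/-- The diagonal of the spectral truncation `∑_{i ∈ T} λ_i x_i x_iᴴ` of a Hermitian matrix `A` to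
the eigenvalues with index in `T`. It distributes `∑_{i ∈ T} λ_i` over the coordinates. -/
noncomputable def spectralDiag (hA : A.IsHermitian) (T : Finset ι) (v : ι) : ℝ :=
  ∑ i ∈ T, hA.eigenvalues i * ‖hA.eigenvectorBasis i v‖ ^ 2

lemma sum_norm_sq_eigenvectorBasis (hA : A.IsHermitian) (i : ι) :
    ∑ v, ‖hA.eigenvectorBasis i v‖ ^ 2 = 1 := by
  rw [← EuclideanSpace.norm_sq_eq, hA.eigenvectorBasis.norm_eq_one, one_pow]

lemma sum_spectralDiag (hA : A.IsHermitian) (T : Finset ι) :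
    ∑ v, spectralDiag hA T v = ∑ i ∈ T, hA.eigenvalues i := by
  simp only [spectralDiag]
  rw [sum_comm]
  simp only [← mul_sum, sum_norm_sq_eigenvectorBasis, mul_one]

lemma spectralDiag_univ (hA : A.IsHermitian) (v : ι) :
    spectralDiag hA univ v = re (A v v) := by
  have diag_eq : A v v = ∑ i, (hA.eigenvalues i * ‖hA.eigenvectorBasis i v‖ ^ 2 : 𝕜) := by
    conv_lhs => rw [hA.spectral_theorem, Unitary.conjStarAlgAut_apply, Matrix.mul_apply]
    refine sum_congr rfl fun i _ ↦ ?_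
    rw [Matrix.mul_diagonal, Matrix.star_apply, hA.eigenvectorUnitary_apply, ← mul_conj]
    simp only [Function.comp_apply, starRingEnd_apply]
    ring
  rw [diag_eq]
  exact_mod_cast (ofReal_re (K := 𝕜) _).symm

lemma spectralDiag_nonneg (hA : A.PosSemidef) (T : Finset ι) (v : ι) :
    0 ≤ spectralDiag hA.isHermitian T v :=
  sum_nonneg fun i _ ↦ mul_nonneg (hA.eigenvalues_nonneg i) (sq_nonneg _)

lemma spectralDiag_le_diag (hA : A.PosSemidef) (T : Finset ι) (v : ι) :
    spectralDiag hA.isHermitian T v ≤ re (A v v) := by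
  rw [← spectralDiag_univ hA.isHermitian]
  exact sum_le_sum_of_subset_of_nonneg (subset_univ T)
    fun i _ _ ↦ mul_nonneg (hA.eigenvalues_nonneg i) (sq_nonneg _)

end SpectralDiag

lemma card_filter_mem_sym2_le {α : Type*} [DecidableEq α] (S : Finset α) (e : Sym2 α)
    [Decidable (∀ v ∈ e, v ∈ S)] :
    #{v ∈ S | v ∈ e} ≤ 1 + if ∀ v ∈ e, v ∈ S then 1 else 0 := by
  have card_le_two : #e.toFinset ≤ 2 := by
    rw [e.card_toFinset]
    split_ifs <;> simp
  have subset : {v ∈ S | v ∈ e} ⊆ e.toFinset := fun v hv ↦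
    Sym2.mem_toFinset.2 (mem_filter.1 hv).2
  split_ifs with h
  · exact (card_le_card subset).trans card_le_two
  · push Not at h
    obtain ⟨v, hve, hvS⟩ := h
    have ssubset : {v ∈ S | v ∈ e} ⊂ e.toFinset :=
      (ssubset_iff_of_subset subset).2
        ⟨v, Sym2.mem_toFinset.2 hve, fun hv ↦ hvS (mem_filter.1 hv).1⟩
    have := card_lt_card ssubset
    omega

section Graph

open Matrix

variable {V : Type*} [Fintype V] [DecidableEq V] (G : SimpleGraph V) [DecidableRel G.Adj]

section Field

variable {R : Type*} [Field R] [LinearOrder R] [IsStrictOrderedRing R]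

lemma sq_lapMatrix_mulVec_div_degree_le (x : V → R) (v : V) :
    (G.lapMatrix R *ᵥ x) v ^ 2 / G.degree v ≤ ∑ u ∈ G.neighborFinset v, (x v - x u) ^ 2 := by
  have mulVec_eq : (G.lapMatrix R *ᵥ x) v = ∑ u ∈ G.neighborFinset v, (x v - x u) := by
    simp [SimpleGraph.lapMatrix_mulVec_apply]
  refine div_le_of_le_mul₀ (Nat.cast_nonneg _) (sum_nonneg fun _ _ ↦ sq_nonneg _) ?_
  rw [mulVec_eq, mul_comm, ← G.card_neighborFinset_eq_degree]
  exact sq_sum_le_card_mul_sum_sq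

lemma sum_sq_lapMatrix_mulVec_div_degree_le (x : V → R) :
    ∑ v, (G.lapMatrix R *ᵥ x) v ^ 2 / G.degree v ≤ 2 * (x ⬝ᵥ G.lapMatrix R *ᵥ x) :=
  calc ∑ v, (G.lapMatrix R *ᵥ x) v ^ 2 / G.degree v
      ≤ ∑ v, ∑ u ∈ G.neighborFinset v, (x v - x u) ^ 2 :=
        sum_le_sum fun v _ ↦ sq_lapMatrix_mulVec_div_degree_le G x v
    _ = 2 * (x ⬝ᵥ G.lapMatrix R *ᵥ x) := by
        rw [← toLinearMap₂'_apply', SimpleGraph.lapMatrix_toLinearMap₂' R G,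
          mul_div_cancel₀ _ two_ne_zero]
        simp only [G.neighborFinset_eq_filter, sum_filter]

lemma sum_mul_sq_div_degree_le_of_lapMatrix_mulVec_eq_smul {x : V → R} {μ : R}
    (hx : G.lapMatrix R *ᵥ x = μ • x) :
    ∑ v, μ * x v ^ 2 / G.degree v ≤ 2 * ∑ v, x v ^ 2 := by
  obtain hμ | hμ := le_or_gt μ 0
  · have lhs_nonpos : ∑ v, μ * x v ^ 2 / G.degree v ≤ 0 := sum_nonpos fun v _ ↦
      div_nonpos_of_nonpos_of_nonneg (mul_nonpos_of_nonpos_of_nonneg hμ (sq_nonneg _))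
        (Nat.cast_nonneg _)
    exact lhs_nonpos.trans (by positivity)
  · refine le_of_mul_le_mul_left ?_ hμ
    calc μ * ∑ v, μ * x v ^ 2 / G.degree v
        = ∑ v, (G.lapMatrix R *ᵥ x) v ^ 2 / G.degree v := by
          rw [mul_sum, hx]
          exact sum_congr rfl fun v _ ↦ by rw [Pi.smul_apply, smul_eq_mul]; ring
      _ ≤ 2 * (x ⬝ᵥ G.lapMatrix R *ᵥ x) := sum_sq_lapMatrix_mulVec_div_degree_le G x
      _ = μ * (2 * ∑ v, x v ^ 2) := by
          rw [hx, dotProduct_smul, smul_eq_mul, mul_left_comm]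
          simp only [dotProduct, sq]

end Field

lemma spectralDiag_lapMatrix_le_degree (T : Finset V) (v : V) :
    spectralDiag (G.posSemidef_lapMatrix ℝ).isHermitian T v ≤ G.degree v := by
  simpa [SimpleGraph.lapMatrix, SimpleGraph.degMatrix] using
    spectralDiag_le_diag (G.posSemidef_lapMatrix ℝ) T v

lemma sum_spectralDiag_lapMatrix_div_degree_le (T : Finset V) :
    ∑ v, spectralDiag (G.posSemidef_lapMatrix ℝ).isHermitian T v / G.degree v ≤ 2 * #T := by
  have hL := (G.posSemidef_lapMatrix ℝ).isHermitian
  have eigenvector_le (i : V) :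
      ∑ v, hL.eigenvalues i * ‖hL.eigenvectorBasis i v‖ ^ 2 / G.degree v ≤ 2 := by
    have key := sum_mul_sq_div_degree_le_of_lapMatrix_mulVec_eq_smul G
      (hL.mulVec_eigenvectorBasis i)
    simp only [← Real.norm_eq_abs, ← sq_abs (hL.eigenvectorBasis i _)] at key
    rwa [sum_norm_sq_eigenvectorBasis, mul_one] at key
  simp only [spectralDiag, sum_div]
  rw [sum_comm]
  exact (sum_le_card_nsmul T _ 2 fun i _ ↦ eigenvector_le i).trans_eq (by simp [mul_comm])

lemma exists_card_eq_sum_eigenvalues_lapMatrix_le_sum_degree {T : Finset V}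
    (hT : 2 * #T ≤ Fintype.card V) :
    ∃ S : Finset V, #S = 2 * #T ∧
      ∑ i ∈ T, (G.posSemidef_lapMatrix ℝ).isHermitian.eigenvalues i ≤
        ∑ v ∈ S, (G.degree v : ℝ) := by
  have hL := G.posSemidef_lapMatrix ℝ
  have w_nonneg := spectralDiag_nonneg hL T
  have w_le := spectralDiag_lapMatrix_le_degree G T
  obtain ⟨S, hcard, hS⟩ := exists_card_eq_sum_mul_le_sum
    (c := fun v ↦ spectralDiag hL.isHermitian T v / G.degree v)
    hT (fun v ↦ (G.degree v).cast_nonneg)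
    (fun v ↦ div_nonneg (w_nonneg v) (Nat.cast_nonneg _))
    (fun v ↦ div_le_one_of_le₀ (w_le v) (Nat.cast_nonneg _))
    (mod_cast sum_spectralDiag_lapMatrix_div_degree_le G T)
  have w_eq (v : V) : spectralDiag hL.isHermitian T v / G.degree v * G.degree v =
      spectralDiag hL.isHermitian T v :=
    div_mul_cancel_of_imp fun h ↦ ((w_le v).trans_eq h).antisymm (w_nonneg v)
  simp only [w_eq, sum_spectralDiag] at hS
  exact ⟨S, hcard, hS⟩

lemma sum_degree_eq_sum_card_filter_mem (S : Finset V) :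
    ∑ v ∈ S, G.degree v = ∑ e ∈ G.edgeFinset, #{v ∈ S | v ∈ e} := by
  simp only [← G.card_incidenceFinset_eq_degree, G.incidenceFinset_eq_filter]
  exact sum_card_bipartiteAbove_eq_sum_card_bipartiteBelow (fun v e ↦ v ∈ e)

lemma sum_degree_le_card_edgeFinset_add (S : Finset V) :
    ∑ v ∈ S, G.degree v ≤ #G.edgeFinset + #{e ∈ G.edgeFinset | ∀ v ∈ e, v ∈ S} := by
  rw [sum_degree_eq_sum_card_filter_mem, card_filter, card_eq_sum_ones, ← sum_add_distrib]
  exact sum_le_sum fun e _ ↦ card_filter_mem_sym2_le S e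

theorem sum_lapEigs_le_max_induced_general {T : Finset V} (hT : 2 * #T ≤ Fintype.card V) :
    ∑ i ∈ T, (G.posSemidef_lapMatrix ℝ).isHermitian.eigenvalues i ≤
      (#G.edgeFinset : ℝ) + (((univ : Finset V).powersetCard (2 * #T)).sup
        (fun S ↦ #{e ∈ G.edgeFinset | ∀ v ∈ e, v ∈ S}) : ℕ) := by
  obtain ⟨S, hcard, hS⟩ := exists_card_eq_sum_eigenvalues_lapMatrix_le_sum_degree G hT
  refine hS.trans ?_
  have induced_le_sup := le_sup (f := fun S : Finset V ↦ #{e ∈ G.edgeFinset | ∀ v ∈ e, v ∈ S})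
    (mem_powersetCard.2 ⟨subset_univ S, hcard⟩)
  exact_mod_cast (sum_degree_le_card_edgeFinset_add G S).trans
    (Nat.add_le_add_left induced_le_sup _)

end Graph

lemma exists_card_eq_sum_ithLargest_eq_sum {n : ℕ} (f : Fin n → ℝ) {k : ℕ} (hk : k ≤ n) :
    ∃ T : Finset (Fin n), #T = k ∧ ∑ i ∈ Icc 1 k, ithLargest f i = ∑ j ∈ T, f j := by
  let position : Fin k ↪ Fin n :=
    (Fin.castLEEmb hk).trans (Fin.revPerm.trans (Tuple.sort f)).toEmbedding
  refine ⟨univ.map position, by simp, ?_⟩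
  rw [sum_map, ← Ico_add_one_right_eq_Icc, sum_Ico_eq_sum_range, Nat.add_sub_cancel,
    ← Fin.sum_univ_eq_sum_range (fun i ↦ ithLargest f (1 + i))]
  refine sum_congr rfl fun i _ ↦ ?_
  have in_range : 1 ≤ 1 + (i : ℕ) ∧ 1 + (i : ℕ) ≤ n := by omega
  simp only [ithLargest, dif_pos in_range, Nat.add_sub_cancel_left]
  rfl

/-- for a graph `G` on `n` vertices and `1 ≤ k ≤ n/2`,
`∑_{i=1}^k λ_i(L(G)) ≤ |E| + max{|E(G[S])| : S ⊆ V, |S| = 2k}`, where `E(G[S])`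
is the set of edges of `G` contained in `S`. -/
theorem sum_lapEigs_le_max_induced {n : ℕ} (G : SimpleGraph (Fin n)) [DecidableRel G.Adj]
    (k : ℕ) (hk1 : 1 ≤ k) (hk2 : k ≤ n / 2) :
    ∑ i ∈ Finset.Icc 1 k, ithLargest (lapEigs G) i ≤
      (G.edgeFinset.card : ℝ) +
        (((((Finset.univ : Finset (Fin n)).powersetCard (2 * k)).sup
          (fun S => (G.edgeFinset.filter (fun e => ∀ v ∈ e, v ∈ S)).card) : ℕ)) : ℝ) := by
  obtain ⟨T, rfl, hsum⟩ := exists_card_eq_sum_ithLargest_eq_sum (lapEigs G) (k := k) (by omega)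
  rw [hsum]
  -- `convert` because `∀ v ∈ e, v ∈ S` is decided by another instance on `Fin n`.
  convert sum_lapEigs_le_max_induced_general G (T := T) (by rw [Fintype.card_fin]; omega)
  rfl
end
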